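/- arXiv:1811.09469 — 3 statements merged into one kernel-verified Lean document; each statement's English description precedes it below -/
import Mathlib

section
/- Let Θ be a measurable space, let μ and ν be probability measures on Θ, let G : Θ → ℝ be a bounded measurable nonnegative function with ‖G‖∞ = sup_θ |G(θ)|, ∫_Θ G dμ > 0 and ∫_Θ G dν > 0, and let e ≥ 0 be such that |∫_Θ ψ dμ − ∫_Θ ψ dν| ≤ e · sup_θ |ψ(θ)| for every bounded measurable ψ : Θ → ℝ. Then for every bounded measurable φ : Θ → ℝ with ‖φ‖∞ = sup_θ |φ(θ)|, | (∫_Θ φG dμ)/(∫_Θ G dμ) − (∫_Θ φG dν)/(∫_Θ G dν) | ≤ 2 e ‖G‖∞ ‖φ‖∞ / (∫_Θ G dμ). -/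
open MeasureTheory

/-!
Write `a / b` and `c / d` for the means of `φ` under the two updates. Both the numerators and the
denominators are integrals of bounded test functions, so `|a - c|` and `|b - d|` are controlled by
the hypothesis, and
`a / b - c / d = ((a - c) - (c / d) * (b - d)) / b`.
The only division by `∫ G dν` is inside `c / d`, a weighted mean of `φ`, so `|c / d| ≤ ‖φ‖∞`. Hence
the constant is free of `∫ G dν`.
-/

theorem abs_div_sub_div_le {K : Type*} [Field K] [LinearOrder K] [IsStrictOrderedRing K]
    (a c : K) {b d : K} (hb : b ≠ 0) (hd : d ≠ 0) :
    |a / b - c / d| ≤ (|a - c| + |c / d| * |b - d|) / |b| := by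
  have div_sub_div_eq : a / b - c / d = ((a - c) - c / d * (b - d)) / b := by
    field_simp
    ring
  rw [div_sub_div_eq, abs_div, ← abs_mul]
  gcongr
  exact abs_sub _ _

section SupNorm

variable {ι : Sort*} {R : Type*} [NonUnitalSeminormedRing R] {f g : ι → R}

theorem norm_mul_le_iSup_norm_mul_iSup_norm (hf : BddAbove (Set.range fun i => ‖f i‖))
    (hg : BddAbove (Set.range fun i => ‖g i‖)) (i : ι) :
    ‖f i * g i‖ ≤ (⨆ j, ‖f j‖) * ⨆ j, ‖g j‖ :=
  norm_mul_le_of_le (le_ciSup hf i) (le_ciSup hg i)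

theorem bddAbove_range_norm_mul (hf : BddAbove (Set.range fun i => ‖f i‖))
    (hg : BddAbove (Set.range fun i => ‖g i‖)) :
    BddAbove (Set.range fun i => ‖f i * g i‖) :=
  ⟨_, Set.forall_mem_range.2 (norm_mul_le_iSup_norm_mul_iSup_norm hf hg)⟩

theorem iSup_norm_mul_le (hf : BddAbove (Set.range fun i => ‖f i‖))
    (hg : BddAbove (Set.range fun i => ‖g i‖)) :
    ⨆ i, ‖f i * g i‖ ≤ (⨆ i, ‖f i‖) * ⨆ i, ‖g i‖ :=
  Real.iSup_le (norm_mul_le_iSup_norm_mul_iSup_norm hf hg) <|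
    mul_nonneg (Real.iSup_nonneg fun _ => norm_nonneg _) (Real.iSup_nonneg fun _ => norm_nonneg _)

end SupNorm

section WeightedMean

variable {Θ : Type*} [MeasurableSpace Θ] {μ ν : Measure Θ} {φ G : Θ → ℝ} {F : ℝ}

theorem abs_integral_mul_div_integral_le (hG : 0 ≤ᵐ[μ] G) (hG_pos : 0 < ∫ θ, G θ ∂μ)
    (hφ : ∀ᵐ θ ∂μ, |φ θ| ≤ F) :
    |(∫ θ, φ θ * G θ ∂μ) / ∫ θ, G θ ∂μ| ≤ F := by
  have hG_int : Integrable G μ := .of_integral_ne_zero hG_pos.ne'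
  have abs_mul_le : ∀ᵐ θ ∂μ, |φ θ * G θ| ≤ F * G θ := by
    filter_upwards [hG, hφ] with θ hGθ hφθ
    rw [abs_mul, abs_of_nonneg hGθ]
    exact mul_le_mul_of_nonneg_right hφθ hGθ
  rw [abs_div, abs_of_pos hG_pos, div_le_iff₀ hG_pos, ← integral_const_mul]
  exact norm_integral_le_of_norm_le (f := fun θ => φ θ * G θ) (hG_int.const_mul F) abs_mul_le

theorem abs_integral_mul_div_integral_sub_le (hG : 0 ≤ᵐ[ν] G) (hGμ : 0 < ∫ θ, G θ ∂μ)
    (hGν : 0 < ∫ θ, G θ ∂ν) (hφ : ∀ᵐ θ ∂ν, |φ θ| ≤ F) :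
    |(∫ θ, φ θ * G θ ∂μ) / (∫ θ, G θ ∂μ) - (∫ θ, φ θ * G θ ∂ν) / (∫ θ, G θ ∂ν)|
      ≤ (|(∫ θ, φ θ * G θ ∂μ) - ∫ θ, φ θ * G θ ∂ν|
          + F * |(∫ θ, G θ ∂μ) - ∫ θ, G θ ∂ν|) / ∫ θ, G θ ∂μ := by
  refine (abs_div_sub_div_le _ _ hGμ.ne' hGν.ne').trans ?_
  rw [abs_of_pos hGμ]
  gcongr
  exact abs_integral_mul_div_integral_le hG hGν hφ

end WeightedMean

-- Bounded functions need not be integrable for infinite measures, and the Bochner integral is then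
-- the junk value `0`; hence the integrability conditions on `ψ`.
theorem bayes_update_stability_general
    {Θ : Type*} [MeasurableSpace Θ] {μ ν : Measure Θ}
    {G : Θ → ℝ} (hG_meas : Measurable G) (hG : 0 ≤ᵐ[ν] G)
    (hG_bdd : BddAbove (Set.range fun θ => |G θ|))
    (hGμ : 0 < ∫ θ, G θ ∂μ) (hGν : 0 < ∫ θ, G θ ∂ν) {e : ℝ} (he : 0 ≤ e)
    (happrox : ∀ ψ : Θ → ℝ, Measurable ψ → BddAbove (Set.range fun θ => |ψ θ|) →
      Integrable ψ μ → Integrable ψ ν → |(∫ θ, ψ θ ∂μ) - ∫ θ, ψ θ ∂ν| ≤ e * ⨆ θ, |ψ θ|)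
    {φ : Θ → ℝ} (hφ_meas : Measurable φ) (hφ_bdd : BddAbove (Set.range fun θ => |φ θ|)) :
    |(∫ θ, φ θ * G θ ∂μ) / (∫ θ, G θ ∂μ) - (∫ θ, φ θ * G θ ∂ν) / (∫ θ, G θ ∂ν)|
      ≤ 2 * e * (⨆ θ, |G θ|) * (⨆ θ, |φ θ|) / (∫ θ, G θ ∂μ) := by
  have hGμ_int : Integrable G μ := .of_integral_ne_zero hGμ.ne'
  have hGν_int : Integrable G ν := .of_integral_ne_zero hGν.ne'
  have hφ_le (θ : Θ) : |φ θ| ≤ ⨆ θ, |φ θ| := le_ciSup hφ_bdd θ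
  have hφ_nonneg : 0 ≤ ⨆ θ, |φ θ| := Real.iSup_nonneg fun θ => abs_nonneg (φ θ)
  have denominator_le : |(∫ θ, G θ ∂μ) - ∫ θ, G θ ∂ν| ≤ e * ⨆ θ, |G θ| :=
    happrox G hG_meas hG_bdd hGμ_int hGν_int
  have hφG_iSup_le : ⨆ θ, |φ θ * G θ| ≤ (⨆ θ, |φ θ|) * ⨆ θ, |G θ| :=
    iSup_norm_mul_le (f := φ) (g := G) hφ_bdd hG_bdd
  have numerator_le : |(∫ θ, φ θ * G θ ∂μ) - ∫ θ, φ θ * G θ ∂ν|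
      ≤ e * ((⨆ θ, |φ θ|) * ⨆ θ, |G θ|) :=
    (happrox (fun θ => φ θ * G θ) (hφ_meas.mul hG_meas)
      (bddAbove_range_norm_mul (f := φ) (g := G) hφ_bdd hG_bdd)
      (hGμ_int.bdd_mul hφ_meas.aestronglyMeasurable (.of_forall hφ_le))
      (hGν_int.bdd_mul hφ_meas.aestronglyMeasurable (.of_forall hφ_le))).trans <|
    mul_le_mul_of_nonneg_left hφG_iSup_le he
  calc |(∫ θ, φ θ * G θ ∂μ) / (∫ θ, G θ ∂μ) - (∫ θ, φ θ * G θ ∂ν) / (∫ θ, G θ ∂ν)|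
      ≤ (|(∫ θ, φ θ * G θ ∂μ) - ∫ θ, φ θ * G θ ∂ν|
          + (⨆ θ, |φ θ|) * |(∫ θ, G θ ∂μ) - ∫ θ, G θ ∂ν|) / ∫ θ, G θ ∂μ :=
        abs_integral_mul_div_integral_sub_le hG hGμ hGν (.of_forall hφ_le)
    _ ≤ (e * ((⨆ θ, |φ θ|) * ⨆ θ, |G θ|) + (⨆ θ, |φ θ|) * (e * ⨆ θ, |G θ|)) / ∫ θ, G θ ∂μ := by
        gcongr
    _ = 2 * e * (⨆ θ, |G θ|) * (⨆ θ, |φ θ|) / ∫ θ, G θ ∂μ := by ring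

/-- Weighting-step stability bound: if `ν` approximates `μ` uniformly over
bounded measurable test functions with error `e`, then the Bayes update of `ν`
with a bounded nonnegative potential `G` approximates the Bayes update of `μ`
with error at most `2e‖G‖∞‖φ‖∞ / ∫G dμ`. -/
theorem bayes_update_stability
    {Θ : Type*} [MeasurableSpace Θ]
    (μ ν : Measure Θ) [IsProbabilityMeasure μ] [IsProbabilityMeasure ν]
    (G : Θ → ℝ) (hGmeas : Measurable G) (hGnn : ∀ θ, 0 ≤ G θ)
    (hGbdd : BddAbove (Set.range fun θ => |G θ|))
    (hGμ : 0 < ∫ θ, G θ ∂μ) (hGν : 0 < ∫ θ, G θ ∂ν)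
    (e : ℝ) (he : 0 ≤ e)
    (happrox : ∀ ψ : Θ → ℝ, Measurable ψ → BddAbove (Set.range fun θ => |ψ θ|) →
      |(∫ θ, ψ θ ∂μ) - ∫ θ, ψ θ ∂ν| ≤ e * ⨆ θ, |ψ θ|) :
    ∀ φ : Θ → ℝ, Measurable φ → BddAbove (Set.range fun θ => |φ θ|) →
      |(∫ θ, φ θ * G θ ∂μ) / (∫ θ, G θ ∂μ) - (∫ θ, φ θ * G θ ∂ν) / (∫ θ, G θ ∂ν)|
        ≤ 2 * e * (⨆ θ, |G θ|) * (⨆ θ, |φ θ|) / (∫ θ, G θ ∂μ) := by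
  exact fun _ => bayes_update_stability_general hGmeas (.of_forall hGnn) hGbdd hGμ hGν he
    fun ψ hψ_meas hψ_bdd _ _ => happrox ψ hψ_meas hψ_bdd
end

section
/- Let (Θ, dist) be a metric space, let f : Θ → ℝ be bounded with M = sup_{θ∈Θ} |f(θ)| < ∞, let θ⋆ ∈ Θ be a global minimizer of f, let Z > 0, and suppose the density π(θ) = exp(−f(θ))/Z is L-Lipschitz on Θ for some L ≥ 0. Let e ≥ 0 and let p : Θ → ℝ satisfy |p(θ) − π(θ)| ≤ e for every θ ∈ Θ. Let S ⊆ Θ be a nonempty set containing a point s₀ with dist(s₀, θ⋆) ≤ r for some r ≥ 0, and let θ̂ ∈ S satisfy p(s) ≤ p(θ̂) for all s ∈ S. Then 0 ≤ f(θ̂) − f(θ⋆) ≤ Z · exp(M) · (2e + L·r). -/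
/-!
Maximizing an `e`-accurate estimate of a density loses at most `2 * e` against every particle, and
moving from `θ⋆` to a particle within `r` loses at most `L * r`. A gap in density turns into a gap
in cost through `t ≤ exp t - 1` at `t = f θ̂ - f θ⋆`, at the price of the factor `exp (f θ̂)`.
-/

theorem sub_le_two_nsmul_of_isMaxOn_of_abs_sub_le {α G : Type*} [AddCommGroup G] [LinearOrder G]
    [IsOrderedAddMonoid G] {p ρ : α → G} {S : Set α} {e : G} (hp : ∀ x ∈ S, |p x - ρ x| ≤ e)
    {x y : α} (hx : x ∈ S) (hy : y ∈ S) (hmax : IsMaxOn p S y) :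
    ρ x - ρ y ≤ 2 • e := by
  have lower_at_x : ρ x ≤ e + p x := sub_le_iff_le_add.mp (abs_sub_le_iff.mp (hp x hx)).2
  have upper_at_y : p y ≤ e + ρ y := sub_le_iff_le_add.mp (abs_sub_le_iff.mp (hp y hy)).1
  rw [sub_le_iff_le_add]
  calc ρ x ≤ e + p x := lower_at_x
    _ ≤ e + p y := by gcongr; exact hmax hx
    _ ≤ e + (e + ρ y) := by gcongr
    _ = 2 • e + ρ y := by rw [two_nsmul, add_assoc]

theorem sub_le_exp_mul_exp_neg_sub_exp_neg (a b : ℝ) :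
    a - b ≤ Real.exp a * (Real.exp (-b) - Real.exp (-a)) :=
  calc a - b ≤ Real.exp (a - b) - 1 := le_sub_iff_add_le.mpr (Real.add_one_le_exp _)
    _ = Real.exp a * (Real.exp (-b) - Real.exp (-a)) := by
      rw [mul_sub, ← Real.exp_add, ← Real.exp_add, add_neg_cancel, Real.exp_zero, sub_eq_add_neg a]

/-- The Gibbs density `exp (-f) / Z` of the cost `f`. The normalizing constant `Z` is an arbitrary
real parameter, not tied to an integral of `exp (-f)`. -/
noncomputable def gibbsDensity {Θ : Type*} (f : Θ → ℝ) (Z : ℝ) (θ : Θ) : ℝ :=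
  Real.exp (-f θ) / Z

section gibbsDensity

variable {Θ : Type*} {f : Θ → ℝ} {Z : ℝ} {θ θ' : Θ}

theorem gibbsDensity_le_gibbsDensity (hZ : 0 ≤ Z) (h : f θ' ≤ f θ) :
    gibbsDensity f Z θ ≤ gibbsDensity f Z θ' := by
  unfold gibbsDensity
  gcongr

theorem cost_sub_le_mul_gibbsDensity_sub (hZ : Z ≠ 0) :
    f θ - f θ' ≤ Z * Real.exp (f θ) * (gibbsDensity f Z θ' - gibbsDensity f Z θ) :=
  calc f θ - f θ' ≤ Real.exp (f θ) * (Real.exp (-f θ') - Real.exp (-f θ)) :=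
      sub_le_exp_mul_exp_neg_sub_exp_neg _ _
    _ = Z * Real.exp (f θ) * (gibbsDensity f Z θ' - gibbsDensity f Z θ) := by
      unfold gibbsDensity
      field_simp

theorem cost_sub_le_of_gibbsDensity_sub_le (hZ : 0 < Z) {M δ : ℝ} (hle : f θ' ≤ f θ)
    (hM : f θ ≤ M) (hδ : gibbsDensity f Z θ' - gibbsDensity f Z θ ≤ δ) :
    f θ - f θ' ≤ Z * Real.exp M * δ := by
  have gap_nonneg : 0 ≤ gibbsDensity f Z θ' - gibbsDensity f Z θ :=
    sub_nonneg.mpr (gibbsDensity_le_gibbsDensity hZ.le hle)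
  calc f θ - f θ' ≤ Z * Real.exp (f θ) * (gibbsDensity f Z θ' - gibbsDensity f Z θ) :=
      cost_sub_le_mul_gibbsDensity_sub hZ.ne'
    _ ≤ Z * Real.exp M * (gibbsDensity f Z θ' - gibbsDensity f Z θ) := by gcongr
    _ ≤ Z * Real.exp M * δ := by gcongr

end gibbsDensity

theorem cost_suboptimality_of_grid_density_maximizer_general
    {Θ : Type*} [PseudoMetricSpace Θ] {f p : Θ → ℝ} {S : Set Θ} {Z L M e r : ℝ} {θstar s₀ θhat : Θ}
    (hmin : ∀ θ ∈ S, f θstar ≤ f θ) (hZ : 0 < Z) (hL : 0 ≤ L)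
    (hLip : ∀ θ ∈ S, gibbsDensity f Z θstar - gibbsDensity f Z θ ≤ L * dist θ θstar)
    (hp : ∀ θ ∈ S, |p θ - gibbsDensity f Z θ| ≤ e)
    (hs₀S : s₀ ∈ S) (hs₀ : dist s₀ θstar ≤ r)
    (hθhatS : θhat ∈ S) (hθhat : IsMaxOn p S θhat) (hM : f θhat ≤ M) :
    0 ≤ f θhat - f θstar ∧ f θhat - f θstar ≤ Z * Real.exp M * (2 * e + L * r) := by
  have covering_loss : gibbsDensity f Z θstar - gibbsDensity f Z s₀ ≤ L * r :=
    (hLip s₀ hs₀S).trans (mul_le_mul_of_nonneg_left hs₀ hL)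
  have estimation_loss : gibbsDensity f Z s₀ - gibbsDensity f Z θhat ≤ 2 • e :=
    sub_le_two_nsmul_of_isMaxOn_of_abs_sub_le hp hs₀S hθhatS hθhat
  have density_loss : gibbsDensity f Z θstar - gibbsDensity f Z θhat ≤ 2 * e + L * r := by
    rw [nsmul_eq_mul, Nat.cast_ofNat] at estimation_loss
    linarith
  have hle : f θstar ≤ f θhat := hmin θhat hθhatS
  exact ⟨sub_nonneg.mpr hle, cost_sub_le_of_gibbsDensity_sub_le hZ hle hM density_loss⟩

/-- Cost suboptimality of the particle-grid maximizer of a kernel density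
estimate: if the Gibbs density `π(θ) = exp(−f(θ))/Z` is `L`-Lipschitz, `p`
approximates `π` uniformly within `e`, and `θ̂` maximizes `p` over a particle
set `S` containing a point within distance `r` of a global minimizer `θ⋆` of
the bounded cost `f`, then `0 ≤ f(θ̂) − f(θ⋆) ≤ Z exp(M) (2e + Lr)`. -/
theorem cost_suboptimality_of_grid_density_maximizer
    {Θ : Type*} [MetricSpace Θ] (f : Θ → ℝ) (M : ℝ) (hM : ∀ θ : Θ, |f θ| ≤ M)
    (θstar : Θ) (hmin : ∀ θ : Θ, f θstar ≤ f θ)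
    (Z : ℝ) (hZ : 0 < Z) (L : ℝ) (hL : 0 ≤ L)
    (hLip : ∀ θ θ' : Θ,
      |Real.exp (-f θ) / Z - Real.exp (-f θ') / Z| ≤ L * dist θ θ')
    (e : ℝ) (he : 0 ≤ e) (p : Θ → ℝ)
    (hp : ∀ θ : Θ, |p θ - Real.exp (-f θ) / Z| ≤ e)
    (S : Set Θ) (r : ℝ) (hr : 0 ≤ r)
    (s₀ : Θ) (hs₀S : s₀ ∈ S) (hs₀ : dist s₀ θstar ≤ r)
    (θhat : Θ) (hθhatS : θhat ∈ S) (hθhat : ∀ s ∈ S, p s ≤ p θhat) :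
    0 ≤ f θhat - f θstar ∧
      f θhat - f θstar ≤ Z * Real.exp M * (2 * e + L * r) := by
  exact cost_suboptimality_of_grid_density_maximizer_general (fun θ _ => hmin θ) hZ hL
    (fun θ _ => (abs_sub_le_iff.mp (hLip θ θstar)).2) (fun θ _ => hp θ) hs₀S hs₀ hθhatS hθhat
    (le_of_abs_le (hM θhat))
end

section
/- Let (Ω, 𝓕, ℙ) be a probability space, Θ a measurable space, π a probability measure on Θ, and let μ be a Markov kernel from Ω to Θ (so that ω ↦ μ_ω is a measurable family of probability measures on Θ). Let N ≥ 1 be an integer, p ≥ 1 a real number, and c ≥ 0, and suppose that for every bounded measurable φ : Θ → ℝ, ( 𝔼[ |∫_Θ φ dμ_ω − ∫_Θ φ dπ|^p ] )^{1/p} ≤ c ‖φ‖∞ / √N. Let G : Θ → ℝ be a bounded measurable nonnegative function with ‖G‖∞ = sup_θ |G(θ)|, ∫_Θ G dπ > 0, and ∫_Θ G dμ_ω > 0 for every ω ∈ Ω. Then for every bounded measurable φ : Θ → ℝ, ( 𝔼[ | (∫_Θ φG dμ_ω)/(∫_Θ G dμ_ω) − (∫_Θ φG dπ)/(∫_Θ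 G dπ) |^p ] )^{1/p} ≤ 2 c ‖G‖∞ ‖φ‖∞ / ( (∫_Θ G dπ) √N ). -/
open MeasureTheory ProbabilityTheory

/-!
Write `m ν φ = ∫ φ G dν / ∫ G dν`. The error of the update is linear in the two errors
`∫ φ G dν - ∫ φ G dπ` and `∫ G dν - ∫ G dπ`, up to a factor that stays bounded:
`m ν φ - m π φ = ((∫ φ G dν - ∫ φ G dπ) - m ν φ * (∫ G dν - ∫ G dπ)) / ∫ G dπ`.
Only the deterministic `∫ G dπ` is left in the denominator, and `|m ν φ| ≤ ‖φ‖∞` because `m ν` is a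
weighted mean. Minkowski's inequality then bounds the `L^p` norm by two terms, each at most
`c ‖G‖∞ ‖φ‖∞ / ((∫ G dπ) √N)`.
-/

open scoped ENNReal

theorem abs_mul_le_iSup_abs_mul_iSup_abs {ι : Type*} {f g : ι → ℝ}
    (hf : BddAbove (Set.range fun i => |f i|)) (hg : BddAbove (Set.range fun i => |g i|)) (i : ι) :
    |f i * g i| ≤ (⨆ j, |f j|) * ⨆ j, |g j| := by
  rw [abs_mul]
  exact mul_le_mul (le_ciSup hf i) (le_ciSup hg i) (abs_nonneg _)
    (Real.iSup_nonneg fun _ => abs_nonneg _)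

section LpNorm

variable {Ω : Type*} [MeasurableSpace Ω] {P : Measure Ω}

theorem ofReal_integral_abs_rpow_rpow_eq_eLpNorm {f : Ω → ℝ} {p : ℝ} (hp : 0 < p)
    (hf : MemLp f (ENNReal.ofReal p) P) :
    ENNReal.ofReal ((∫ ω, |f ω| ^ p ∂P) ^ (1 / p)) = eLpNorm f (ENNReal.ofReal p) P := by
  rw [hf.eLpNorm_eq_integral_rpow_norm (ENNReal.ofReal_pos.2 hp).ne' ENNReal.ofReal_ne_top,
    ENNReal.toReal_ofReal hp.le, one_div]
  simp only [Real.norm_eq_abs]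

theorem eLpNorm_le_ofReal_of_integral_abs_rpow_rpow_le {f : Ω → ℝ} {p r : ℝ} (hp : 0 < p)
    (hf : MemLp f (ENNReal.ofReal p) P) (h : (∫ ω, |f ω| ^ p ∂P) ^ (1 / p) ≤ r) :
    eLpNorm f (ENNReal.ofReal p) P ≤ ENNReal.ofReal r :=
  ofReal_integral_abs_rpow_rpow_eq_eLpNorm hp hf ▸ ENNReal.ofReal_le_ofReal h

theorem integral_abs_rpow_rpow_le_of_eLpNorm_le_ofReal {f : Ω → ℝ} {p r : ℝ} (hp : 0 < p)
    (hf : AEStronglyMeasurable f P) (hr : 0 ≤ r)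
    (h : eLpNorm f (ENNReal.ofReal p) P ≤ ENNReal.ofReal r) :
    (∫ ω, |f ω| ^ p ∂P) ^ (1 / p) ≤ r := by
  have hfLp : MemLp f (ENNReal.ofReal p) P := ⟨hf, h.trans_lt ENNReal.ofReal_lt_top⟩
  rwa [← ENNReal.ofReal_le_ofReal_iff hr, ofReal_integral_abs_rpow_rpow_eq_eLpNorm hp hfLp]

theorem eLpNorm_le_mul_add_of_ae_norm_le {E F F' : Type*} [NormedAddCommGroup E]
    [NormedAddCommGroup F] [NormedAddCommGroup F'] {p : ℝ≥0∞} (hp : 1 ≤ p)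
    {X : Ω → F} {Y : Ω → F'} {Z : Ω → E} (hX : AEStronglyMeasurable X P)
    (hY : AEStronglyMeasurable Y P) {a M : ℝ} (h : ∀ᵐ ω ∂P, ‖Z ω‖ ≤ a * (‖X ω‖ + M * ‖Y ω‖)) :
    eLpNorm Z p P ≤ ‖a‖ₑ * (eLpNorm X p P + ‖M‖ₑ * eLpNorm Y p P) :=
  calc eLpNorm Z p P
      ≤ eLpNorm (a • ((fun ω => ‖X ω‖) + M • fun ω => ‖Y ω‖)) p P := eLpNorm_mono_ae_real h
    _ = ‖a‖ₑ * eLpNorm ((fun ω => ‖X ω‖) + M • fun ω => ‖Y ω‖) p P := eLpNorm_const_smul ..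
    _ ≤ ‖a‖ₑ * (eLpNorm (fun ω => ‖X ω‖) p P + eLpNorm (M • fun ω => ‖Y ω‖) p P) := by
        gcongr
        exact eLpNorm_add_le hX.norm (hY.norm.const_smul M) hp
    _ = ‖a‖ₑ * (eLpNorm X p P + ‖M‖ₑ * eLpNorm Y p P) := by
        rw [eLpNorm_const_smul, eLpNorm_norm, eLpNorm_norm]

theorem memLp_integral_kernel {Θ E : Type*} [MeasurableSpace Θ] [NormedAddCommGroup E]
    [NormedSpace ℝ E] [IsFiniteMeasure P] (μ : Kernel Ω Θ) [IsFiniteKernel μ] (p : ℝ≥0∞)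
    {f : Θ → E} (hf : StronglyMeasurable f) {C : ℝ} (hC : ∀ θ, ‖f θ‖ ≤ C) :
    MemLp (fun ω => ∫ θ, f θ ∂(μ ω)) p P := by
  refine MemLp.of_bound (hf.integral_kernel (κ := μ)).aestronglyMeasurable (|C| * μ.bound.toReal)
    (ae_of_all _ fun ω => ?_)
  calc ‖∫ θ, f θ ∂(μ ω)‖
      ≤ |C| * (μ ω).real Set.univ :=
        norm_integral_le_of_norm_le_const (ae_of_all _ fun θ => (hC θ).trans (le_abs_self C))
    _ ≤ |C| * μ.bound.toReal := by
        gcongr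
        exact ENNReal.toReal_mono μ.bound_ne_top (μ.measure_le_bound ω Set.univ)

end LpNorm

section ReweightedMean

variable {Θ : Type*} [MeasurableSpace Θ]

/-- The mean of `φ` under the Bayes update of `ν` with potential `G`, that is, under the probability
measure proportional to `G dν`. It is encoded as a quotient of integrals against `ν`, so its value
is `0` when `∫ G dν = 0`. -/
noncomputable def reweightedMean (ν : Measure Θ) (G φ : Θ → ℝ) : ℝ :=
  (∫ θ, φ θ * G θ ∂ν) / ∫ θ, G θ ∂ν

theorem abs_reweightedMean_le {ν : Measure Θ} {G φ : Θ → ℝ} {M : ℝ} (hG : ∀ θ, 0 ≤ G θ)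
    (hφ : ∀ θ, |φ θ| ≤ M) (hGν : 0 < ∫ θ, G θ ∂ν) : |reweightedMean ν G φ| ≤ M := by
  have hGint : Integrable G ν := .of_integral_ne_zero hGν.ne'
  rw [reweightedMean, abs_div, abs_of_pos hGν, div_le_iff₀ hGν, ← integral_const_mul]
  refine norm_integral_le_of_norm_le (f := fun θ => φ θ * G θ) (hGint.const_mul M)
    (ae_of_all _ fun θ => ?_)
  rw [Real.norm_eq_abs, abs_mul, abs_of_nonneg (hG θ)]
  exact mul_le_mul_of_nonneg_right (hφ θ) (hG θ)

theorem reweightedMean_sub_reweightedMean {ν π : Measure Θ} {G : Θ → ℝ} (φ : Θ → ℝ)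
    (hGν : ∫ θ, G θ ∂ν ≠ 0) (hGπ : ∫ θ, G θ ∂π ≠ 0) :
    reweightedMean ν G φ - reweightedMean π G φ =
      (∫ θ, G θ ∂π)⁻¹ * ((∫ θ, φ θ * G θ ∂ν) - (∫ θ, φ θ * G θ ∂π)
        - reweightedMean ν G φ * ((∫ θ, G θ ∂ν) - ∫ θ, G θ ∂π)) := by
  unfold reweightedMean
  field_simp
  ring

theorem abs_reweightedMean_sub_reweightedMean_le {ν π : Measure Θ} {G φ : Θ → ℝ} {M : ℝ}
    (hG : ∀ θ, 0 ≤ G θ) (hφ : ∀ θ, |φ θ| ≤ M) (hGν : 0 < ∫ θ, G θ ∂ν) (hGπ : 0 < ∫ θ, G θ ∂π) :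
    |reweightedMean ν G φ - reweightedMean π G φ| ≤
      (∫ θ, G θ ∂π)⁻¹ * (|(∫ θ, φ θ * G θ ∂ν) - ∫ θ, φ θ * G θ ∂π|
        + M * |(∫ θ, G θ ∂ν) - ∫ θ, G θ ∂π|) := by
  rw [reweightedMean_sub_reweightedMean φ hGν.ne' hGπ.ne', abs_mul, abs_of_pos (inv_pos.2 hGπ)]
  gcongr
  refine (abs_sub _ _).trans ?_
  rw [abs_mul]
  gcongr
  exact abs_reweightedMean_le hG hφ hGν

variable {Ω : Type*} [MeasurableSpace Ω]

theorem stronglyMeasurable_reweightedMean (μ : Kernel Ω Θ) {G φ : Θ → ℝ} (hG : Measurable G)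
    (hφ : Measurable φ) : StronglyMeasurable fun ω => reweightedMean (μ ω) G φ :=
  (hφ.mul hG).stronglyMeasurable.integral_kernel.div hG.stronglyMeasurable.integral_kernel

theorem eLpNorm_reweightedMean_sub_le {P : Measure Ω} {π : Measure Θ} {μ : Kernel Ω Θ} {p : ℝ≥0∞}
    (hp : 1 ≤ p) {G φ : Θ → ℝ} {M : ℝ} (hGmeas : Measurable G) (hφmeas : Measurable φ)
    (hG : ∀ θ, 0 ≤ G θ) (hφ : ∀ θ, |φ θ| ≤ M) (hGπ : 0 < ∫ θ, G θ ∂π)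
    (hGμ : ∀ᵐ ω ∂P, 0 < ∫ θ, G θ ∂(μ ω)) :
    eLpNorm (fun ω => reweightedMean (μ ω) G φ - reweightedMean π G φ) p P ≤
      ‖(∫ θ, G θ ∂π)⁻¹‖ₑ *
        (eLpNorm (fun ω => (∫ θ, φ θ * G θ ∂(μ ω)) - ∫ θ, φ θ * G θ ∂π) p P
          + ‖M‖ₑ * eLpNorm (fun ω => (∫ θ, G θ ∂(μ ω)) - ∫ θ, G θ ∂π) p P) := by
  have aestronglyMeasurable_error {ψ : Θ → ℝ} (hψ : Measurable ψ) :
      AEStronglyMeasurable (fun ω => (∫ θ, ψ θ ∂(μ ω)) - ∫ θ, ψ θ ∂π) P :=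
    (hψ.stronglyMeasurable.integral_kernel.sub stronglyMeasurable_const).aestronglyMeasurable
  refine eLpNorm_le_mul_add_of_ae_norm_le hp (aestronglyMeasurable_error (hφmeas.mul hGmeas))
    (aestronglyMeasurable_error hGmeas) ?_
  filter_upwards [hGμ] with ω hω
  exact abs_reweightedMean_sub_reweightedMean_le hG hφ hω hGπ

theorem eLpNorm_reweightedMean_sub_le_of_eLpNorm_le {P : Measure Ω} {π : Measure Θ} {μ : Kernel Ω Θ}
    {p ε : ℝ≥0∞} (hp : 1 ≤ p) {G φ : Θ → ℝ} (hGmeas : Measurable G) (hφmeas : Measurable φ)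
    (hG : ∀ θ, 0 ≤ G θ) (hGbdd : BddAbove (Set.range fun θ => |G θ|))
    (hφbdd : BddAbove (Set.range fun θ => |φ θ|)) (hGπ : 0 < ∫ θ, G θ ∂π)
    (hGμ : ∀ᵐ ω ∂P, 0 < ∫ θ, G θ ∂(μ ω))
    (happroxG : eLpNorm (fun ω => (∫ θ, G θ ∂(μ ω)) - ∫ θ, G θ ∂π) p P ≤
      ε * ENNReal.ofReal (⨆ θ, |G θ|))
    (happroxφG : eLpNorm (fun ω => (∫ θ, φ θ * G θ ∂(μ ω)) - ∫ θ, φ θ * G θ ∂π) p P ≤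
      ε * ENNReal.ofReal (⨆ θ, |φ θ * G θ|)) :
    eLpNorm (fun ω => reweightedMean (μ ω) G φ - reweightedMean π G φ) p P ≤
      ε * ENNReal.ofReal (2 * (⨆ θ, |G θ|) * (⨆ θ, |φ θ|) / ∫ θ, G θ ∂π) := by
  set K := ⨆ θ, |G θ|
  set M := ⨆ θ, |φ θ|
  set b := ∫ θ, G θ ∂π
  have hK : 0 ≤ K := Real.iSup_nonneg fun _ => abs_nonneg _
  have hM : 0 ≤ M := Real.iSup_nonneg fun _ => abs_nonneg _
  have iSup_abs_mul_le : ⨆ θ, |φ θ * G θ| ≤ M * K :=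
    Real.iSup_le (abs_mul_le_iSup_abs_mul_iSup_abs hφbdd hGbdd) (mul_nonneg hM hK)
  calc eLpNorm (fun ω => reweightedMean (μ ω) G φ - reweightedMean π G φ) p P
      ≤ ‖b⁻¹‖ₑ * (ε * ENNReal.ofReal (M * K) + ‖M‖ₑ * (ε * ENNReal.ofReal K)) := by
        grw [eLpNorm_reweightedMean_sub_le hp hGmeas hφmeas hG (le_ciSup hφbdd) hGπ hGμ,
          happroxφG, happroxG, iSup_abs_mul_le]
    _ = ε * (ENNReal.ofReal b⁻¹ * (2 * (ENNReal.ofReal M * ENNReal.ofReal K))) := by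
        rw [Real.enorm_of_nonneg (inv_pos.2 hGπ).le, Real.enorm_of_nonneg hM,
          ENNReal.ofReal_mul hM]
        ring
    _ = ε * ENNReal.ofReal (2 * K * M / b) := by
        rw [← ENNReal.ofReal_mul hM, ← ENNReal.ofReal_ofNat 2, ← ENNReal.ofReal_mul zero_le_two,
          ← ENNReal.ofReal_mul (inv_pos.2 hGπ).le]
        ring_nf

theorem bayes_update_Lp_stability_general {P : Measure Ω} [IsFiniteMeasure P] {π : Measure Θ}
    {μ : Kernel Ω Θ} [IsFiniteKernel μ] {p ε : ℝ} (hp : 1 ≤ p) (hε : 0 ≤ ε) {G φ : Θ → ℝ}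
    (hGmeas : Measurable G) (hφmeas : Measurable φ) (hG : ∀ θ, 0 ≤ G θ)
    (hGbdd : BddAbove (Set.range fun θ => |G θ|)) (hφbdd : BddAbove (Set.range fun θ => |φ θ|))
    (hGπ : 0 < ∫ θ, G θ ∂π) (hGμ : ∀ᵐ ω ∂P, 0 < ∫ θ, G θ ∂(μ ω))
    (happroxG : (∫ ω, |(∫ θ, G θ ∂(μ ω)) - ∫ θ, G θ ∂π| ^ p ∂P) ^ (1 / p) ≤ ε * ⨆ θ, |G θ|)
    (happroxφG : (∫ ω, |(∫ θ, φ θ * G θ ∂(μ ω)) - ∫ θ, φ θ * G θ ∂π| ^ p ∂P) ^ (1 / p) ≤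
      ε * ⨆ θ, |φ θ * G θ|) :
    (∫ ω, |reweightedMean (μ ω) G φ - reweightedMean π G φ| ^ p ∂P) ^ (1 / p) ≤
      ε * (2 * (⨆ θ, |G θ|) * (⨆ θ, |φ θ|) / ∫ θ, G θ ∂π) := by
  have hp0 : 0 < p := zero_lt_one.trans_le hp
  have hK : 0 ≤ ⨆ θ, |G θ| := Real.iSup_nonneg fun _ => abs_nonneg _
  have hM : 0 ≤ ⨆ θ, |φ θ| := Real.iSup_nonneg fun _ => abs_nonneg _
  have eLpNorm_error_le {ψ : Θ → ℝ} {C : ℝ} (hψ : Measurable ψ) (hψC : ∀ θ, |ψ θ| ≤ C)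
      (h : (∫ ω, |(∫ θ, ψ θ ∂(μ ω)) - ∫ θ, ψ θ ∂π| ^ p ∂P) ^ (1 / p) ≤ ε * ⨆ θ, |ψ θ|) :
      eLpNorm (fun ω => (∫ θ, ψ θ ∂(μ ω)) - ∫ θ, ψ θ ∂π) (ENNReal.ofReal p) P ≤
        ENNReal.ofReal ε * ENNReal.ofReal (⨆ θ, |ψ θ|) := by
    rw [← ENNReal.ofReal_mul hε]
    exact eLpNorm_le_ofReal_of_integral_abs_rpow_rpow_le hp0
      ((memLp_integral_kernel μ _ hψ.stronglyMeasurable hψC).sub (memLp_const _)) h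
  refine integral_abs_rpow_rpow_le_of_eLpNorm_le_ofReal hp0
    ((stronglyMeasurable_reweightedMean μ hGmeas hφmeas).sub
      stronglyMeasurable_const).aestronglyMeasurable (by positivity) ?_
  rw [ENNReal.ofReal_mul hε]
  exact eLpNorm_reweightedMean_sub_le_of_eLpNorm_le (ENNReal.one_le_ofReal.2 hp) hGmeas hφmeas hG
    hGbdd hφbdd hGπ hGμ (eLpNorm_error_le hGmeas (le_ciSup hGbdd) happroxG)
    (eLpNorm_error_le (hφmeas.mul hGmeas) (abs_mul_le_iSup_abs_mul_iSup_abs hφbdd hGbdd) happroxφG)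

end ReweightedMean

/-- Weighting-step `L^p` stability: if the random measure `μ_ω` approximates
`π` in `L^p` with rate `c‖φ‖∞/√N` uniformly over bounded measurable test
functions, then its Bayes update with a bounded nonnegative potential `G`
approximates the Bayes update of `π` at rate `2c‖G‖∞‖φ‖∞/((∫G dπ)√N)`. -/
theorem bayes_update_Lp_stability
    {Ω Θ : Type*} [MeasurableSpace Ω] [MeasurableSpace Θ]
    (P : Measure Ω) [IsProbabilityMeasure P]
    (π : Measure Θ) [IsProbabilityMeasure π]
    (μ : Kernel Ω Θ) [IsMarkovKernel μ]
    (N : ℕ) (hN : 1 ≤ N) (p : ℝ) (hp : 1 ≤ p) (c : ℝ) (hc : 0 ≤ c)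
    (happrox : ∀ ψ : Θ → ℝ, Measurable ψ → BddAbove (Set.range fun θ => |ψ θ|) →
      (∫ ω, |(∫ θ, ψ θ ∂(μ ω)) - ∫ θ, ψ θ ∂π| ^ p ∂P) ^ (1 / p)
        ≤ c * (⨆ θ, |ψ θ|) / Real.sqrt N)
    (G : Θ → ℝ) (hGmeas : Measurable G) (hGnn : ∀ θ, 0 ≤ G θ)
    (hGbdd : BddAbove (Set.range fun θ => |G θ|))
    (hGπ : 0 < ∫ θ, G θ ∂π) (hGμ : ∀ ω : Ω, 0 < ∫ θ, G θ ∂(μ ω)) :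
    ∀ φ : Θ → ℝ, Measurable φ → BddAbove (Set.range fun θ => |φ θ|) →
      (∫ ω, |(∫ θ, φ θ * G θ ∂(μ ω)) / (∫ θ, G θ ∂(μ ω))
            - (∫ θ, φ θ * G θ ∂π) / (∫ θ, G θ ∂π)| ^ p ∂P) ^ (1 / p)
        ≤ 2 * c * (⨆ θ, |G θ|) * (⨆ θ, |φ θ|)
            / ((∫ θ, G θ ∂π) * Real.sqrt N) := by
  intro φ hφmeas hφbdd
  have hφGbdd : BddAbove (Set.range fun θ => |φ θ * G θ|) :=
    ⟨_, Set.forall_mem_range.2 (abs_mul_le_iSup_abs_mul_iSup_abs hφbdd hGbdd)⟩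
  exact (bayes_update_Lp_stability_general (ε := c / √N) hp (by positivity) hGmeas hφmeas hGnn
    hGbdd hφbdd hGπ (ae_of_all P hGμ)
    (happroxG := (happrox G hGmeas hGbdd).trans_eq (by ring))
    (happroxφG := (happrox (fun θ => φ θ * G θ) (hφmeas.mul hGmeas) hφGbdd).trans_eq (by ring))
    ).trans_eq (by ring)
end
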